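/- Let L : ℝ^d → ℝ be convex, differentiable, and ν_L-strongly smooth (L(w') − L(w) − ⟨w' − w, ∇L(w)⟩ ≤ (ν_L/2)‖w' − w‖²), and let G : ℝ^s → ℝ^d be differentiable, ν_G-strongly smooth, κ_G-Lipschitz, and with ‖DG(z)‖_op ≤ κ_G for all z. Fix ρ > 0, define L_ρ(w, z, λ) := L(w) + ⟨w − G(z), λ⟩ + (ρ/2)‖w − G(z)‖², and let (w*, z*, λ*) satisfy w* = G(z*). Let (w, z, λ) be a current iterate with ‖λ‖ ≤ λ_max and ‖w − G(z)‖ ≤ a, and form one linearized-ADMM iteration with R ≡ 0, H ≡ 0: z⁺ := z − β∇_z L_ρ(w, z, λ), w⁺ := w − α∇_w L_ρ(w, z⁺, λ), λ⁺ := λ + σ(w⁺ − G(z⁺)), with σ ≥ 0 and step sizes α ≤ 1/(ν_L + ρ) and β ≤ 1/(ξ + 2ατ²), where ξ := ν_G(λ_max + ρ·a) + 2ρκ_G² and τ := ρκ_G. Then for every θ ∈ [0, 1]: L_ρ(w⁺, z⁺, λ⁺) − L_ρ(w*, z*, λ*) ≤ (1 − θ)(L_ρ(w, z, λ) − L_ρ(w*,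 z*, λ*)) + θ·(ν_G(λ_max + ρ·a)/2)‖z − z*‖² + θ²(‖w − w*‖²/α + ‖z − z*‖²/(2β)) + σ‖w⁺ − G(z⁺)‖². (The master one-step descent inequality at the heart of the proof of Theorem 1.) -/

import Mathlib

open scoped RealInnerProductSpace

/-- The augmented Lagrangian `L_ρ(w, z, λ) := L(w) + ⟪w − G(z), λ⟫ + (ρ/2)‖w − G(z)‖²`
(with `R ≡ 0` and `H ≡ 0`). -/
noncomputable def augLagrangian {s d : ℕ}
    (L : EuclideanSpace ℝ (Fin d) → ℝ)
    (G : EuclideanSpace ℝ (Fin s) → EuclideanSpace ℝ (Fin d)) (ρ : ℝ)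
    (w : EuclideanSpace ℝ (Fin d)) (z : EuclideanSpace ℝ (Fin s))
    (lam : EuclideanSpace ℝ (Fin d)) : ℝ :=
  L w + ⟪w - G z, lam⟫ + ρ / 2 * ‖w - G z‖ ^ 2

theorem convex_grad_ineq {d : ℕ} (L : EuclideanSpace ℝ (Fin d) → ℝ)
    (hconv : ConvexOn ℝ Set.univ L) (g w w' : EuclideanSpace ℝ (Fin d))
    (hL : HasGradientAt L g w) : ⟪w' - w, g⟫ ≤ L w' - L w := by
  have hf := hL.hasFDerivAt
  have hline : HasDerivAt (fun t : ℝ => w + t • (w' - w)) (w' - w) 0 := by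
    simpa using ((hasDerivAt_id (0 : ℝ)).smul_const (w' - w)).const_add w
  have hf' : HasFDerivAt L ((InnerProductSpace.toDual ℝ _) g) (w + (0 : ℝ) • (w' - w)) := by
    simpa using hf
  have hd : HasDerivAt (fun t : ℝ => L (w + t • (w' - w))) ⟪g, w' - w⟫ 0 := by
    have := hf'.comp_hasDerivAt (0 : ℝ) hline
    simpa [Function.comp_def] using this
  have hc : ConvexOn ℝ Set.univ (fun t : ℝ => L (w + t • (w' - w))) := by
    have := hconv.comp_affineMap (AffineMap.lineMap (k := ℝ) w w')
    simpa [Function.comp_def, AffineMap.lineMap_apply, add_comm] using this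
  have := hc.le_slope_of_hasDerivAt (Set.mem_univ 0) (Set.mem_univ 1) one_pos hd
  rw [real_inner_comm]
  simpa [slope_def_field] using this

/-- completing the square: `v` minimises the proximal quadratic -/
theorem prox_ineq {d : ℕ} (q v y : EuclideanSpace ℝ (Fin d)) (α θ : ℝ) (hα : 0 < α)
    (hv : v = -(α • q)) :
    ⟪v, q⟫ + 1 / (2 * α) * ‖v‖ ^ 2 ≤ θ * ⟪y, q⟫ + θ ^ 2 * (‖y‖ ^ 2 / (2 * α)) := by
  have h := sq_nonneg ‖θ • y + α • q‖
  rw [norm_add_sq_real, norm_smul, norm_smul, real_inner_smul_left, real_inner_smul_right,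
    mul_pow, mul_pow, Real.norm_eq_abs, Real.norm_eq_abs, sq_abs, sq_abs] at h
  subst hv
  rw [inner_neg_left, real_inner_smul_left, real_inner_self_eq_norm_sq, norm_neg, norm_smul,
    mul_pow, Real.norm_eq_abs, sq_abs]
  have e : θ * ⟪y, q⟫ + θ ^ 2 * (‖y‖ ^ 2 / (2 * α)) -
      (-(α * ‖q‖ ^ 2) + 1 / (2 * α) * (α ^ 2 * ‖q‖ ^ 2)) =
      (θ ^ 2 * ‖y‖ ^ 2 + 2 * (θ * (α * ⟪y, q⟫)) + α ^ 2 * ‖q‖ ^ 2) / (2 * α) := by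
    field_simp
    ring
  have : 0 ≤ (θ ^ 2 * ‖y‖ ^ 2 + 2 * (θ * (α * ⟪y, q⟫)) + α ^ 2 * ‖q‖ ^ 2) / (2 * α) := by
    positivity
  linarith

/-- the master one-step descent inequality at the heart of the
proof of Theorem 1. One linearized-ADMM iteration
`z⁺ = z − β∇_z L_ρ(w, z, λ)`, `w⁺ = w − α∇_w L_ρ(w, z⁺, λ)`,
`λ⁺ = λ + σ(w⁺ − G(z⁺))`, with step sizes `α ≤ 1/(ν_L + ρ)` and
`β ≤ 1/(ξ + 2ατ²)` where `ξ = ν_G(λ_max + ρa) + 2ρκ_G²` and `τ = ρκ_G`,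
decreases the augmented Lagrangian as stated, for every `θ ∈ [0, 1]`. -/
theorem admm_one_step_descent {s d : ℕ}
    (L : EuclideanSpace ℝ (Fin d) → ℝ)
    (hconv : ConvexOn ℝ Set.univ L)
    (gradL : EuclideanSpace ℝ (Fin d) → EuclideanSpace ℝ (Fin d))
    (hL : ∀ w, HasGradientAt L (gradL w) w)
    (νL : ℝ)
    (hLsmooth : ∀ w w' : EuclideanSpace ℝ (Fin d),
      L w' - L w - ⟪w' - w, gradL w⟫ ≤ νL / 2 * ‖w' - w‖ ^ 2)
    (G : EuclideanSpace ℝ (Fin s) → EuclideanSpace ℝ (Fin d))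
    (DG : EuclideanSpace ℝ (Fin s) →
      EuclideanSpace ℝ (Fin s) →L[ℝ] EuclideanSpace ℝ (Fin d))
    (hG : ∀ z, HasFDerivAt G (DG z) z)
    (νG κG : ℝ)
    (hGsmooth : ∀ z z' : EuclideanSpace ℝ (Fin s),
      ‖G z' - G z - DG z (z' - z)‖ ≤ νG / 2 * ‖z' - z‖ ^ 2)
    (hGLip : ∀ z z' : EuclideanSpace ℝ (Fin s), ‖G z' - G z‖ ≤ κG * ‖z' - z‖)
    (hDGbound : ∀ z : EuclideanSpace ℝ (Fin s), ‖DG z‖ ≤ κG)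
    (ρ : ℝ) (hρ : 0 < ρ)
    (wstar : EuclideanSpace ℝ (Fin d)) (zstar : EuclideanSpace ℝ (Fin s))
    (lamstar : EuclideanSpace ℝ (Fin d))
    (hfeas : wstar = G zstar)
    (w : EuclideanSpace ℝ (Fin d)) (z : EuclideanSpace ℝ (Fin s))
    (lam : EuclideanSpace ℝ (Fin d))
    (lamMax a : ℝ) (hlam : ‖lam‖ ≤ lamMax) (ha : ‖w - G z‖ ≤ a)
    (σ : ℝ) (hσ : 0 ≤ σ)
    (ξ τ α β : ℝ)
    (hξ : ξ = νG * (lamMax + ρ * a) + 2 * ρ * κG ^ 2)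
    (hτ : τ = ρ * κG)
    (hα : 0 < α) (hβ : 0 < β)
    (hαle : α ≤ 1 / (νL + ρ)) (hβle : β ≤ 1 / (ξ + 2 * α * τ ^ 2))
    (zplus : EuclideanSpace ℝ (Fin s))
    (hzplus : zplus = z - β • (-((DG z).adjoint (lam + ρ • (w - G z)))))
    (wplus : EuclideanSpace ℝ (Fin d))
    (hwplus : wplus = w - α • (gradL w + lam + ρ • (w - G zplus)))
    (lamplus : EuclideanSpace ℝ (Fin d))
    (hlamplus : lamplus = lam + σ • (wplus - G zplus)) :
    ∀ θ ∈ Set.Icc (0 : ℝ) 1,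
      augLagrangian L G ρ wplus zplus lamplus
          - augLagrangian L G ρ wstar zstar lamstar
        ≤ (1 - θ) * (augLagrangian L G ρ w z lam
              - augLagrangian L G ρ wstar zstar lamstar)
          + θ * (νG * (lamMax + ρ * a) / 2) * ‖z - zstar‖ ^ 2
          + θ ^ 2 * (‖w - wstar‖ ^ 2 / α + ‖z - zstar‖ ^ 2 / (2 * β))
          + σ * ‖wplus - G zplus‖ ^ 2 := by
  rintro θ ⟨hθ0, hθ1⟩
  have hκ : 0 ≤ κG := (norm_nonneg _).trans (hDGbound z)
  set e := w - G z with he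
  set μ := lam + ρ • e with hμ
  have hμn : ‖μ‖ ≤ lamMax + ρ * a := by
    refine (norm_add_le _ _).trans (add_le_add hlam ?_)
    rw [norm_smul, Real.norm_of_nonneg hρ.le]
    exact mul_le_mul_of_nonneg_left ha hρ.le
  -- linearisation error bound
  have hlin : ∀ z', -⟪z' - z, (DG z).adjoint μ⟫ + ⟪G z' - G z, μ⟫
      ≤ νG * (lamMax + ρ * a) / 2 * ‖z' - z‖ ^ 2 ∧
      -⟪G z' - G z, μ⟫ + ⟪z' - z, (DG z).adjoint μ⟫
      ≤ νG * (lamMax + ρ * a) / 2 * ‖z' - z‖ ^ 2 := by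
    intro z'
    have h1 := abs_real_inner_le_norm (G z' - G z - DG z (z' - z)) μ
    have h2 : ‖G z' - G z - DG z (z' - z)‖ * ‖μ‖ ≤
        νG / 2 * ‖z' - z‖ ^ 2 * (lamMax + ρ * a) :=
      mul_le_mul (hGsmooth z z') hμn (norm_nonneg _) ((norm_nonneg _).trans (hGsmooth z z'))
    rw [inner_sub_left] at h1
    rw [ContinuousLinearMap.adjoint_inner_right]
    have h3 := abs_le.1 (h1.trans h2)
    constructor <;> linarith [h3.1, h3.2]
  set Δ := G zplus - G z with hΔ
  set u := zplus - z with hu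
  set v := wplus - w with hv
  set q := gradL w + lam + ρ • (w - G zplus) with hq
  have hqe : q = gradL w + μ - ρ • Δ := by
    rw [hq, hμ, he, hΔ]; module
  have hve : v = -(α • q) := by rw [hv, hwplus]; abel
  have hue : u = -(β • (-((DG z).adjoint μ))) := by rw [hu, hzplus]; abel
  have hpw := prox_ineq q v (wstar - w) α θ hα hve
  have hpz := prox_ineq (-((DG z).adjoint μ)) u (zstar - z) β θ hβ hue
  rw [inner_neg_right, inner_neg_right] at hpz
  have hsm := hLsmooth w wplus
  rw [← hv] at hsm
  have hcv := convex_grad_ineq L hconv _ w wstar (hL w)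
  have hlz := (hlin zstar).1
  have hlu := (hlin zplus).2
  rw [← hu, ← hΔ] at hlu
  have hΔn : ‖Δ‖ ≤ κG * ‖u‖ := hGLip z zplus
  have hΔ2 : ‖Δ‖ ^ 2 ≤ κG ^ 2 * ‖u‖ ^ 2 := by
    rw [← mul_pow]; exact pow_le_pow_left₀ (norm_nonneg _) hΔn 2
  have hνρ : 0 < νL + ρ := by
    by_contra h
    have := one_div_nonpos.2 (not_lt.1 h)
    linarith
  have hA : νL + ρ ≤ 1 / α := by
    rw [le_div_iff₀ hα]; rw [le_div_iff₀ hνρ] at hαle; linarith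
  have hξpos : 0 < ξ + 2 * α * τ ^ 2 := by
    by_contra h
    have := one_div_nonpos.2 (not_lt.1 h)
    linarith
  have hB : ξ + 2 * α * τ ^ 2 ≤ 1 / β := by
    rw [le_div_iff₀ hβ]; rw [le_div_iff₀ hξpos] at hβle; linarith
  have hA' : (νL + ρ) / 2 * ‖v‖ ^ 2 ≤ 1 / (2 * α) * ‖v‖ ^ 2 := by
    apply mul_le_mul_of_nonneg_right _ (sq_nonneg _)
    have : 1 / (2 * α) = 1 / α / 2 := by field_simp
    rw [this]; linarith
  have hB' : (ξ + 2 * α * τ ^ 2) / 2 * ‖u‖ ^ 2 ≤ 1 / (2 * β) * ‖u‖ ^ 2 := by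
    apply mul_le_mul_of_nonneg_right _ (sq_nonneg _)
    have : 1 / (2 * β) = 1 / β / 2 := by field_simp
    rw [this]; linarith
  -- cross term
  have hcross : -(θ * (ρ * ⟪wstar - w, Δ⟫)) ≤
      θ ^ 2 * (‖wstar - w‖ ^ 2 / (2 * α)) + α * ρ ^ 2 * ‖Δ‖ ^ 2 / 2 := by
    have h := sq_nonneg ‖θ • (wstar - w) + (α * ρ) • Δ‖
    rw [norm_add_sq_real, norm_smul, norm_smul, real_inner_smul_left, real_inner_smul_right,
      mul_pow, mul_pow, Real.norm_eq_abs, Real.norm_eq_abs, sq_abs, sq_abs] at h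
    have h' := div_nonneg h (by positivity : 0 ≤ 2 * α)
    have e : (θ ^ 2 * ‖wstar - w‖ ^ 2 + 2 * (θ * (α * ρ * ⟪wstar - w, Δ⟫)) +
        (α * ρ) ^ 2 * ‖Δ‖ ^ 2) / (2 * α) = θ ^ 2 * (‖wstar - w‖ ^ 2 / (2 * α)) +
        α * ρ ^ 2 * ‖Δ‖ ^ 2 / 2 + θ * (ρ * ⟪wstar - w, Δ⟫) := by
      field_simp
      ring
    linarith
  -- expansions
  have e1 : wplus - G zplus = e + v - Δ := by rw [he, hv, hΔ]; abel
  have e2 : augLagrangian L G ρ wplus zplus lamplus = L wplus + ⟪e + v - Δ, lam⟫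
      + ρ / 2 * ‖e + v - Δ‖ ^ 2 + σ * ‖wplus - G zplus‖ ^ 2 := by
    unfold augLagrangian
    rw [hlamplus, inner_add_right, real_inner_smul_right, real_inner_self_eq_norm_sq, e1]
    ring
  have e3 : augLagrangian L G ρ wstar zstar lamstar = L wstar := by
    simp [augLagrangian, ← hfeas]
  have e4 : augLagrangian L G ρ w z lam = L w + ⟪e, lam⟫ + ρ / 2 * ‖e‖ ^ 2 := rfl
  have e5 : G zstar - G z = (wstar - w) + e := by rw [he, ← hfeas]; abel
  rw [e5, inner_add_left] at hlz
  have e6 : ‖e + v - Δ‖ ^ 2 = ‖e‖ ^ 2 + ‖v‖ ^ 2 + ‖Δ‖ ^ 2 + 2 * ⟪v, e⟫ - 2 * ⟪Δ, e⟫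
      - 2 * ⟪v, Δ⟫ := by
    rw [norm_sub_sq_real, norm_add_sq_real, inner_add_left, real_inner_comm v e,
      real_inner_comm Δ e]
    ring
  have e7 : ∀ x, ⟪x, q⟫ = ⟪x, gradL w⟫ + ⟪x, μ⟫ - ρ * ⟪x, Δ⟫ := by
    intro x; rw [hqe, inner_sub_right, inner_add_right, real_inner_smul_right]
  have e8 : ∀ x, ⟪x, μ⟫ = ⟪x, lam⟫ + ρ * ⟪x, e⟫ := by
    intro x; rw [hμ, inner_add_right, real_inner_smul_right]
  have e9 : ⟪e, e⟫ = ‖e‖ ^ 2 := real_inner_self_eq_norm_sq e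
  have hΔρ : ρ / 2 * ‖Δ‖ ^ 2 ≤ ρ / 2 * (κG ^ 2 * ‖u‖ ^ 2) :=
    mul_le_mul_of_nonneg_left hΔ2 (by positivity)
  have hΔα : α * ρ ^ 2 / 2 * ‖Δ‖ ^ 2 ≤ α * ρ ^ 2 / 2 * (κG ^ 2 * ‖u‖ ^ 2) :=
    mul_le_mul_of_nonneg_left hΔ2 (by positivity)
  have hn1 : 0 ≤ ρ * (κG ^ 2 * ‖u‖ ^ 2) := by positivity
  have hn2 : 0 ≤ α * ρ ^ 2 * (κG ^ 2 * ‖u‖ ^ 2) := by positivity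
  have hn3 : 0 ≤ ρ * ‖e‖ ^ 2 := by positivity
  have hw2 : ‖wstar - w‖ ^ 2 / (2 * α) = ‖wstar - w‖ ^ 2 / α / 2 := by field_simp
  rw [hw2] at hpw hcross
  -- the `θ` part
  have hθ := mul_le_mul_of_nonneg_left (add_le_add hcv hlz) hθ0
  have hθe := mul_nonneg hθ0 hn3
  rw [e2, e3, e4, e6, norm_sub_rev w wstar, norm_sub_rev z zstar]
  simp only [inner_add_left, inner_sub_left]
  rw [e7, e7, e8, e8] at hpw
  rw [e8] at hlu
  rw [e8, e8, e9] at hθ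
  subst hξ hτ
  linarith
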